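/- Let g = K³ with basis e₁, e₂, e₃ and the Leibniz bracket determined bilinearly by [e₁,e₁]_g = e₃ and all other brackets of basis vectors equal to zero, with its regular representation ρL(x)y = [x,y]_g, ρR(x)y = [y,x]_g. Then every linear map T : g → g whose matrix (a_{ij}) with respect to the basis (where Te_j = a_{1j}e₁ + a_{2j}e₂ + a_{3j}e₃) satisfies a_{11} = a_{12} = a_{13} = 0 is a relative Rota-Baxter operator on (g,[·,·]_g) with respect to the regular representation. -/

import Mathlib

/-!
The first row of the matrix of `T` vanishes, so `T` takes values in the span of `e₂` and `e₃`,
which annihilates the whole algebra from both sides: every bracket in the Rota-Baxter identity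
has an argument in the image of `T`, so both sides of the identity are zero.
-/

section Operator

variable {R g V : Type*} [CommSemiring R] [AddCommMonoid g] [Module R g]
  [AddCommMonoid V] [Module R V]

/-- Relative Rota-Baxter operators `T : V → g` for a bracket `br` on `g` and left and right
actions `ρL`, `ρR` of `g` on `V`. Only the operator identity is recorded: the Leibniz identity for
`br` and the representation axioms are left out. The regular representation is `ρL = br`,
`ρR = br.flip`. -/
def IsRelativeRotaBaxter (br : g →ₗ[R] g →ₗ[R] g) (ρL ρR : g →ₗ[R] V →ₗ[R] V)
    (T : V →ₗ[R] g) : Prop :=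
  ∀ u v : V, br (T u) (T v) = T (ρL (T u) v + ρR (T v) u)

theorem IsRelativeRotaBaxter.of_range_le_ker {br : g →ₗ[R] g →ₗ[R] g}
    {ρL ρR : g →ₗ[R] V →ₗ[R] V} {T : V →ₗ[R] g} (hbr : T.range ≤ br.ker)
    (hL : T.range ≤ ρL.ker) (hR : T.range ≤ ρR.ker) : IsRelativeRotaBaxter br ρL ρR T := by
  intro u v
  have br_T : br (T u) = 0 := hbr (T.mem_range_self u)
  have ρL_T : ρL (T u) = 0 := hL (T.mem_range_self u)
  have ρR_T : ρR (T v) = 0 := hR (T.mem_range_self v)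
  simp [br_T, ρL_T, ρR_T]

end Operator

section Coordinates

variable {ι R M N P : Type*} [AddCommMonoid M] [AddCommMonoid N] [AddCommMonoid P]

theorem range_le_ker_of_repr_eq_zero [Semiring R] [Module R M] [Module R N] [Module R P]
    (b : Module.Basis ι R M) (S : Set ι) {T : N →ₗ[R] M} {f : M →ₗ[R] P}
    (hT : ∀ x, ∀ i ∈ S, b.repr (T x) i = 0) (hf : ∀ i ∉ S, f (b i) = 0) :
    T.range ≤ f.ker := by
  have range_le_span : T.range ≤ Submodule.span R (b '' Sᶜ) := by
    rintro _ ⟨x, rfl⟩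
    rw [b.mem_span_image]
    exact fun i hi hiS => Finsupp.mem_support_iff.mp hi (hT x i hiS)
  have span_le_ker : Submodule.span R (b '' Sᶜ) ≤ f.ker := by
    rw [Submodule.span_le]
    rintro _ ⟨i, hi, rfl⟩
    exact hf i hi
  exact range_le_span.trans span_le_ker

variable [CommSemiring R] [Module R M]

theorem example_rota_baxter_first_family_general (b : Module.Basis ι R M) (S : Set ι)
    {br : M →ₗ[R] M →ₗ[R] M} (hbr : ∀ i j, ¬(i ∈ S ∧ j ∈ S) → br (b i) (b j) = 0)
    {T : M →ₗ[R] M} (hT : ∀ i ∈ S, ∀ j, b.repr (T (b j)) i = 0) :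
    IsRelativeRotaBaxter br br br.flip T := by
  have repr_T : ∀ x, ∀ i ∈ S, b.repr (T x) i = 0 := fun x i hi =>
    LinearMap.congr_fun (b.ext (hT i hi) : b.coord i ∘ₗ T = 0) x
  have left_annihilator : T.range ≤ br.ker :=
    range_le_ker_of_repr_eq_zero b S repr_T fun i hi =>
      b.ext fun j => hbr i j fun h => hi h.1
  have right_annihilator : T.range ≤ br.flip.ker :=
    range_le_ker_of_repr_eq_zero b S repr_T fun j hj =>
      b.ext fun i => hbr i j fun h => hj h.2
  exact .of_range_le_ker left_annihilator left_annihilator right_annihilator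

end Coordinates

/-- On the 3-dimensional Leibniz algebra with `[e₁,e₁] = e₃` (all other
basis brackets zero), every linear map `T` whose matrix satisfies
`a₁₁ = a₁₂ = a₁₃ = 0` is a relative Rota-Baxter operator with respect to the regular
representation. -/
theorem example_rota_baxter_first_family
    {K : Type*} [Field K] [CharZero K]
    (e : Fin 3 → (Fin 3 → K))
    (he : ∀ i : Fin 3, e i = Pi.single i 1)
    (br : (Fin 3 → K) →ₗ[K] (Fin 3 → K) →ₗ[K] (Fin 3 → K))
    (hbr : ∀ i j : Fin 3, br (e i) (e j) = if i = 0 ∧ j = 0 then e 2 else 0)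
    (T : (Fin 3 → K) →ₗ[K] (Fin 3 → K))
    (a : Fin 3 → Fin 3 → K)
    (ha : ∀ i j : Fin 3, T (e j) i = a i j)
    (h11 : a 0 0 = 0) (h12 : a 0 1 = 0) (h13 : a 0 2 = 0) :
    ∀ x y : Fin 3 → K, br (T x) (T y) = T (br (T x) y + br x (T y)) := by
  have e_eq_basis : ∀ i, Pi.basisFun K (Fin 3) i = e i := by simp [he]
  have first_row : ∀ j, a 0 j = 0 := by
    intro j
    fin_cases j <;> assumption
  exact example_rota_baxter_first_family_general (Pi.basisFun K (Fin 3)) {0}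
    (fun i j hij => by simp only [e_eq_basis, hbr]; exact if_neg hij)
    (by rintro _ rfl j; rw [e_eq_basis, Pi.basisFun_repr, ha, first_row])
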